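/- For the Schwarzschild data, the Einstein–Hilbert Lagrangian four-form (1/4) Σ_{a,b,c,d} ε_{abcd} R^{ab} ∧ e^c ∧ e^d vanishes identically on U (so the contact form restricts to zero on the vacuum solution). Explicitly, at every point of U, Σ_{τ ∈ S₄} sgn(τ) Σ_{a,b,c,d} ε_{abcd} · R^{ab}_{τ(0)τ(1)} · E^c_{τ(2)} · E^d_{τ(3)} = 0, where S₄ is the group of permutations of the coordinate indices {0,1,2,3} = (t,r,θ,φ). -/

import Mathlib

open scoped BigOperators

/-- Minkowski metric diag(1,-1,-1,-1) on index set {0,1,2,3}. -/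
noncomputable def eta (a b : Fin 4) : ℝ :=
  if a = b then (if a = 0 then 1 else -1) else 0

/-- Levi-Civita symbol ε_{abcd} on {0,1,2,3}. -/
noncomputable def eps (a b c d : Fin 4) : ℝ :=
  ∑ σ : Equiv.Perm (Fin 4),
    if ![a, b, c, d] = ⇑σ then ((Equiv.Perm.sign σ : ℤ) : ℝ) else 0

/-- Partial derivative in the μ-th coordinate direction of ℝ⁴. -/
noncomputable def pd (μ : Fin 4) (F : (Fin 4 → ℝ) → ℝ) (x : Fin 4 → ℝ) : ℝ :=
  fderiv ℝ F x (Pi.single μ 1)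

/-- f(r) = √(1 − 2Gm/r); the coordinates are x = (t,r,θ,φ). -/
noncomputable def fS (G m : ℝ) (x : Fin 4 → ℝ) : ℝ :=
  Real.sqrt (1 - 2 * G * m / x 1)

/-- The Schwarzschild chart U = {r > 2Gm, r > 0, 0 < θ < π}. -/
def Uchart (G m : ℝ) : Set (Fin 4 → ℝ) :=
  {x | 2 * G * m < x 1 ∧ 0 < x 1 ∧ 0 < x 2 ∧ x 2 < Real.pi}

/-- The Schwarzschild vierbein E^a_μ: E⁰_t = f, E¹_r = 1/f, E²_θ = r,
E³_φ = r sin θ, all other components zero. -/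
noncomputable def Evb (G m : ℝ) (x : Fin 4 → ℝ) : Fin 4 → Fin 4 → ℝ :=
  ![![fS G m x, 0, 0, 0],
    ![0, (fS G m x)⁻¹, 0, 0],
    ![0, 0, x 1, 0],
    ![0, 0, 0, x 1 * Real.sin (x 2)]]

/-- The Schwarzschild spin connection ω_μ^{ab}, antisymmetric in (a,b), with
nonzero components ω_t^{01} = −Gm/r², ω_θ^{12} = f, ω_φ^{13} = f sin θ,
ω_φ^{23} = cos θ (indexed as `sw G m x μ a b`). -/
noncomputable def sw (G m : ℝ) (x : Fin 4 → ℝ) : Fin 4 → Fin 4 → Fin 4 → ℝ :=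
  ![![![0, -(G * m) / (x 1) ^ 2, 0, 0],
     ![(G * m) / (x 1) ^ 2, 0, 0, 0],
     ![0, 0, 0, 0],
     ![0, 0, 0, 0]],
    ![![0, 0, 0, 0], ![0, 0, 0, 0], ![0, 0, 0, 0], ![0, 0, 0, 0]],
    ![![0, 0, 0, 0],
     ![0, 0, fS G m x, 0],
     ![0, -fS G m x, 0, 0],
     ![0, 0, 0, 0]],
    ![![0, 0, 0, 0],
     ![0, 0, 0, fS G m x * Real.sin (x 2)],
     ![0, 0, 0, Real.cos (x 2)],
     ![0, -(fS G m x * Real.sin (x 2)), -Real.cos (x 2), 0]]]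

/-- The index-lowered spin connection ω_μ^a{}_c = Σ_b ω_μ^{ab} η_{bc}. -/
noncomputable def swl (G m : ℝ) (x : Fin 4 → ℝ) (μ a c : Fin 4) : ℝ :=
  ∑ b : Fin 4, sw G m x μ a b * eta b c

/-- Torsion components T^a_{μν} of the Schwarzschild data. -/
noncomputable def Tor (G m : ℝ) (x : Fin 4 → ℝ) (a μ ν : Fin 4) : ℝ :=
  pd μ (fun y => Evb G m y a ν) x - pd ν (fun y => Evb G m y a μ) x
    + ∑ c : Fin 4, (swl G m x μ a c * Evb G m x c ν - swl G m x ν a c * Evb G m x c μ)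

/-- Curvature components R^{ab}_{μν} of the Schwarzschild spin connection. -/
noncomputable def Rcurv (G m : ℝ) (x : Fin 4 → ℝ) (a b μ ν : Fin 4) : ℝ :=
  pd μ (fun y => sw G m y ν a b) x - pd ν (fun y => sw G m y μ a b) x
    + ∑ c : Fin 4, (swl G m x μ a c * sw G m x ν c b - swl G m x ν a c * sw G m x μ c b)

/-!
The curvature components satisfy `R^{ab}_{ab} = κ_{ab} E^a_a E^b_b`, with `κ_{ab} = -2Gm/r³` on the
planes `tr` and `θφ` and `κ_{ab} = Gm/r³` on the other four. Since `E` is diagonal, contracting with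
the Levi-Civita symbol leaves only the terms `R^{ab}_{ab} E^c_c E^d_d` with `a, b, c, d` distinct,
so the Lagrangian is a multiple of `det E` times the sum of `κ_{ab}` over `a ≠ b`. This sum vanishes
because each row of `κ` sums to zero, which is the vanishing of the diagonal of the Ricci tensor.
-/

open Equiv Finset

theorem card_sub_one_nsmul_sum_perm {ι M : Type*} [Fintype ι] [DecidableEq ι] [AddCommMonoid M]
    (F : ι → ι → M) {i j : ι} (hij : j ≠ i) :
    (Fintype.card ι - 1) • ∑ τ : Perm ι, F (τ i) (τ j) =
      ∑ τ : Perm ι, ∑ b ∈ univ.erase (τ i), F (τ i) b := by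
  have second_slot (k : ι) (hk : k ∈ univ.erase i) :
      ∑ τ : Perm ι, F (τ i) (τ k) = ∑ τ : Perm ι, F (τ i) (τ j) := by
    rw [← Equiv.sum_comp (Equiv.mulRight (swap k j))]
    simp [swap_apply_of_ne_of_ne (ne_of_mem_erase hk).symm hij.symm]
  calc (Fintype.card ι - 1) • ∑ τ : Perm ι, F (τ i) (τ j)
      = ∑ k ∈ univ.erase i, ∑ τ : Perm ι, F (τ i) (τ k) := by
        rw [sum_congr rfl second_slot, sum_const, card_erase_of_mem (mem_univ i), card_univ]
    _ = ∑ τ : Perm ι, ∑ k ∈ univ.erase i, F (τ i) (τ k) := sum_comm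
    _ = ∑ τ : Perm ι, ∑ b ∈ univ.erase (τ i), F (τ i) b :=
        sum_congr rfl fun τ _ ↦ sum_equiv τ (by simp) (by simp)

theorem sum_eps_mul (F : Fin 4 → Fin 4 → Fin 4 → Fin 4 → ℝ) :
    ∑ a, ∑ b, ∑ c, ∑ d, eps a b c d * F a b c d =
      ∑ σ : Perm (Fin 4), ((Perm.sign σ : ℤ) : ℝ) * F (σ 0) (σ 1) (σ 2) (σ 3) := by
  have eq_coe_iff (a b c d : Fin 4) (σ : Perm (Fin 4)) :
      ![a, b, c, d] = ⇑σ ↔ a = σ 0 ∧ b = σ 1 ∧ c = σ 2 ∧ d = σ 3 := by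
    simp [funext_iff, Fin.forall_fin_succ]
  have pick (σ : Perm (Fin 4)) :
      ((Perm.sign σ : ℤ) : ℝ) * F (σ 0) (σ 1) (σ 2) (σ 3) =
        ∑ a, ∑ b, ∑ c, ∑ d,
          if ![a, b, c, d] = ⇑σ then ((Perm.sign σ : ℤ) : ℝ) * F a b c d else 0 := by
    simp [eq_coe_iff, ite_and]
  simp only [pick, eps, sum_mul, ite_mul, zero_mul]
  symm
  iterate 3 (rw [sum_comm]; refine sum_congr rfl fun _ _ ↦ ?_)
  exact sum_comm

theorem perm_eq_one_or_swap_of_fixes_two_three :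
    ∀ ρ : Perm (Fin 4), ρ 2 = 2 → ρ 3 = 3 → ρ = 1 ∨ ρ = swap 0 1 := by
  decide

theorem sign_mul_sum_eps_mul_diagonal (R E : Fin 4 → Fin 4 → ℝ)
    (hE : ∀ a μ, a ≠ μ → E a μ = 0) (τ : Perm (Fin 4)) :
    ((Perm.sign τ : ℤ) : ℝ) *
        ∑ a, ∑ b, ∑ c, ∑ d, eps a b c d * R a b * E c (τ 2) * E d (τ 3) =
      (R (τ 0) (τ 1) - R (τ 1) (τ 0)) * E (τ 2) (τ 2) * E (τ 3) (τ 3) := by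
  let term (ρ : Perm (Fin 4)) : ℝ := ((Perm.sign ρ : ℤ) : ℝ) *
    (R (τ (ρ 0)) (τ (ρ 1)) * E (τ (ρ 2)) (τ 2) * E (τ (ρ 3)) (τ 3))
  have term_eq_zero (ρ : Perm (Fin 4)) (hρ : ρ ∉ ({1, swap 0 1} : Finset (Perm (Fin 4)))) :
      term ρ = 0 := by
    by_cases h2 : ρ 2 = 2
    · have h3 : ρ 3 ≠ 3 := fun h3 ↦ hρ (by
        simpa using perm_eq_one_or_swap_of_fixes_two_three ρ h2 h3)
      simp [term, hE _ _ (τ.injective.ne h3)]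
    · simp [term, hE _ _ (τ.injective.ne h2)]
  have sign_sq : ((Perm.sign τ : ℤ) : ℝ) * ((Perm.sign τ : ℤ) : ℝ) = 1 := by
    exact_mod_cast Int.units_coe_mul_self (Perm.sign τ)
  calc ((Perm.sign τ : ℤ) : ℝ) *
        ∑ a, ∑ b, ∑ c, ∑ d, eps a b c d * R a b * E c (τ 2) * E d (τ 3)
      = ∑ ρ : Perm (Fin 4), term ρ := by
        simp only [mul_assoc (eps _ _ _ _)]
        rw [sum_eps_mul fun a b c d ↦ R a b * E c (τ 2) * E d (τ 3),
          ← Equiv.sum_comp (Equiv.mulLeft τ), mul_sum]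
        refine sum_congr rfl fun ρ _ ↦ ?_
        simp only [term, coe_mulLeft, Perm.sign_mul, Perm.mul_apply, Units.val_mul, Int.cast_mul]
        linear_combination term ρ * sign_sq
    _ = ∑ ρ ∈ {1, swap 0 1}, term ρ :=
        (sum_subset (subset_univ _) fun ρ _ ↦ term_eq_zero ρ).symm
    _ = (R (τ 0) (τ 1) - R (τ 1) (τ 0)) * E (τ 2) (τ 2) * E (τ 3) (τ 3) := by
        have swap_two : swap (0 : Fin 4) 1 2 = 2 := by decide
        have swap_three : swap (0 : Fin 4) 1 3 = 3 := by decide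
        rw [sum_pair (by decide)]
        simp [term, swap_two, swap_three, sub_eq_add_neg, add_mul]

theorem pd_const (μ : Fin 4) (c : ℝ) (x : Fin 4 → ℝ) : pd μ (fun _ ↦ c) x = 0 := by
  simp [pd]

theorem pd_neg (μ : Fin 4) (F : (Fin 4 → ℝ) → ℝ) (x : Fin 4 → ℝ) :
    pd μ (fun y ↦ -F y) x = -pd μ F x := by
  simp [pd, fderiv_fun_neg]

theorem pd_mul (μ : Fin 4) {F K : (Fin 4 → ℝ) → ℝ} {x : Fin 4 → ℝ}
    (hF : DifferentiableAt ℝ F x) (hK : DifferentiableAt ℝ K x) :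
    pd μ (fun y ↦ F y * K y) x = F x * pd μ K x + K x * pd μ F x := by
  simp [pd, fderiv_fun_mul hF hK]

theorem pd_comp_apply (μ : Fin 4) {g : ℝ → ℝ} {g' : ℝ} {i : Fin 4} {x : Fin 4 → ℝ}
    (hg : HasDerivAt g g' (x i)) :
    pd μ (fun y ↦ g (y i)) x = if μ = i then g' else 0 := by
  have hasFDerivAt_comp : HasFDerivAt (fun y : Fin 4 → ℝ ↦ g (y i))
      (g' • ContinuousLinearMap.proj (R := ℝ) i) x :=
    hg.comp_hasFDerivAt x (hasFDerivAt_apply i x)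
  rw [pd, hasFDerivAt_comp.fderiv]
  simp [Pi.single_apply, eq_comm]

theorem pd_cos_theta (μ : Fin 4) (x : Fin 4 → ℝ) :
    pd μ (fun y ↦ Real.cos (y 2)) x = if μ = 2 then -Real.sin (x 2) else 0 :=
  pd_comp_apply μ (Real.hasDerivAt_cos (x 2))

theorem pd_sin_theta (μ : Fin 4) (x : Fin 4 → ℝ) :
    pd μ (fun y ↦ Real.sin (y 2)) x = if μ = 2 then Real.cos (x 2) else 0 :=
  pd_comp_apply μ (Real.hasDerivAt_sin (x 2))

theorem pd_div_r_sq (μ : Fin 4) (c : ℝ) {x : Fin 4 → ℝ} (hr : x 1 ≠ 0) :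
    pd μ (fun y ↦ c / y 1 ^ 2) x = if μ = 1 then -2 * c / x 1 ^ 3 else 0 := by
  refine pd_comp_apply (g := fun r ↦ c / r ^ 2) μ ?_
  refine ((hasDerivAt_const (x 1) c).fun_div (hasDerivAt_pow 2 (x 1))
    (pow_ne_zero 2 hr)).congr_deriv ?_
  field_simp
  push_cast
  ring

theorem hasDerivAt_sqrt_one_sub_div {c r : ℝ} (hr : r ≠ 0) (hc : c / r < 1) :
    HasDerivAt (fun s ↦ √(1 - c / s)) (c / (2 * r ^ 2 * √(1 - c / r))) r := by
  refine ((((hasDerivAt_const r c).fun_div (hasDerivAt_id' r) hr).const_sub 1).sqrt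
    (sub_pos.2 hc).ne').congr_deriv ?_
  field_simp
  ring

theorem Evb_of_ne (G m : ℝ) (x : Fin 4 → ℝ) (a μ : Fin 4) (h : a ≠ μ) : Evb G m x a μ = 0 := by
  fin_cases a <;> fin_cases μ <;> first | exact absurd rfl h | rfl

theorem sw_antisymm (G m : ℝ) (x : Fin 4 → ℝ) (μ a b : Fin 4) :
    sw G m x μ a b = -sw G m x μ b a := by
  fin_cases μ <;> fin_cases a <;> fin_cases b <;> simp [sw, neg_div]

theorem swl_eq_mul_eta (G m : ℝ) (x : Fin 4 → ℝ) (μ a c : Fin 4) :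
    swl G m x μ a c = sw G m x μ a c * eta c c := by
  simp [swl, eta]

theorem Rcurv_antisymm_coord (G m : ℝ) (x : Fin 4 → ℝ) (a b μ ν : Fin 4) :
    Rcurv G m x a b μ ν = -Rcurv G m x a b ν μ := by
  simp only [Rcurv, sum_sub_distrib]
  ring

theorem Rcurv_antisymm_frame (G m : ℝ) (x : Fin 4 → ℝ) (a b μ ν : Fin 4) :
    Rcurv G m x a b μ ν = -Rcurv G m x b a μ ν := by
  have pd_sw_antisymm (μ ν : Fin 4) :
      pd μ (fun y ↦ sw G m y ν a b) x = -pd μ (fun y ↦ sw G m y ν b a) x := by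
    rw [← pd_neg]
    exact congrArg (pd μ · x) (funext fun y ↦ sw_antisymm G m y ν a b)
  have swl_mul_sw_comm (μ ν c : Fin 4) :
      swl G m x μ a c * sw G m x ν c b = swl G m x ν b c * sw G m x μ c a := by
    rw [swl_eq_mul_eta, swl_eq_mul_eta, sw_antisymm G m x μ a c, sw_antisymm G m x ν c b]
    ring
  simp only [Rcurv, pd_sw_antisymm, swl_mul_sw_comm, sum_sub_distrib]
  ring

/-- The Schwarzschild curvature `κ_{ab} = R^{ab}_{ab} / (E^a_a E^b_b)` of the plane spanned by the
frame vectors `a` and `b`, at radius `r`; the diagonal entries are set to zero. -/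
noncomputable def planeCurvature (G m r : ℝ) (a b : Fin 4) : ℝ :=
  G * m / r ^ 3 *
    ![![0, -2, 1, 1],
      ![-2, 0, 1, 1],
      ![1, 1, 0, -2],
      ![1, 1, -2, 0]] a b

theorem planeCurvature_comm (G m r : ℝ) (a b : Fin 4) :
    planeCurvature G m r a b = planeCurvature G m r b a := by
  fin_cases a <;> fin_cases b <;> rfl

theorem sum_erase_planeCurvature (G m r : ℝ) (a : Fin 4) :
    ∑ b ∈ univ.erase a, planeCurvature G m r a b = 0 := by
  rw [sum_erase _ (by fin_cases a <;> simp [planeCurvature])]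
  simp only [planeCurvature, ← mul_sum]
  refine mul_eq_zero_of_right _ ?_
  fin_cases a <;> simp [Fin.sum_univ_four] <;> norm_num

theorem sum_perm_planeCurvature (G m r : ℝ) :
    ∑ τ : Perm (Fin 4), planeCurvature G m r (τ 0) (τ 1) = 0 := by
  have h := card_sub_one_nsmul_sum_perm (planeCurvature G m r) (i := 0) (j := 1) (by decide)
  simpa only [sum_erase_planeCurvature, sum_const_zero, smul_eq_zero, Fintype.card_fin,
    Nat.reduceSub, OfNat.ofNat_ne_zero, false_or] using h

section Exterior

variable {G m : ℝ} {x : Fin 4 → ℝ}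

theorem fS_sq (hf : 2 * G * m / x 1 < 1) : fS G m x ^ 2 = 1 - 2 * G * m / x 1 :=
  Real.sq_sqrt (sub_pos.2 hf).le

theorem fS_pos (hf : 2 * G * m / x 1 < 1) : 0 < fS G m x :=
  Real.sqrt_pos.2 (sub_pos.2 hf)

theorem pd_fS (hr : x 1 ≠ 0) (hf : 2 * G * m / x 1 < 1) (μ : Fin 4) :
    pd μ (fun y ↦ fS G m y) x = if μ = 1 then G * m / (x 1 ^ 2 * fS G m x) else 0 := by
  refine pd_comp_apply (g := fun r ↦ √(1 - 2 * G * m / r)) μ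
    ((hasDerivAt_sqrt_one_sub_div hr hf).congr_deriv ?_)
  rw [← fS, mul_assoc 2 G m, mul_assoc 2 (x 1 ^ 2), mul_div_mul_left _ _ two_ne_zero]

theorem pd_fS_mul_sin (hr : x 1 ≠ 0) (hf : 2 * G * m / x 1 < 1) (μ : Fin 4) :
    pd μ (fun y ↦ fS G m y * Real.sin (y 2)) x =
      fS G m x * (if μ = 2 then Real.cos (x 2) else 0) +
        Real.sin (x 2) * (if μ = 1 then G * m / (x 1 ^ 2 * fS G m x) else 0) := by
  have differentiableAt_fS : DifferentiableAt ℝ (fun y ↦ fS G m y) x :=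
    (hasDerivAt_sqrt_one_sub_div hr hf).differentiableAt.comp (f := fun y ↦ y 1) x
      (differentiableAt_apply 1 x)
  rw [pd_mul μ differentiableAt_fS (by fun_prop), pd_fS hr hf, pd_sin_theta]

theorem Rcurv_tr (hr : x 1 ≠ 0) : Rcurv G m x 0 1 0 1 = -(2 * G * m / x 1 ^ 3) := by
  simp [Rcurv, swl_eq_mul_eta, sw, eta, Fin.sum_univ_four, pd_const, pd_div_r_sq _ _ hr,
    mul_assoc]

theorem Rcurv_tθ : Rcurv G m x 0 2 0 2 = G * m / x 1 ^ 2 * fS G m x := by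
  simp [Rcurv, swl_eq_mul_eta, sw, eta, Fin.sum_univ_four, pd_const, neg_div]

theorem Rcurv_tφ :
    Rcurv G m x 0 3 0 3 = G * m / x 1 ^ 2 * (fS G m x * Real.sin (x 2)) := by
  simp [Rcurv, swl_eq_mul_eta, sw, eta, Fin.sum_univ_four, pd_const, neg_div]

theorem Rcurv_rθ (hr : x 1 ≠ 0) (hf : 2 * G * m / x 1 < 1) :
    Rcurv G m x 1 2 1 2 = G * m / (x 1 ^ 2 * fS G m x) := by
  simp [Rcurv, swl_eq_mul_eta, sw, eta, Fin.sum_univ_four, pd_const, pd_fS hr hf]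

theorem Rcurv_rφ (hr : x 1 ≠ 0) (hf : 2 * G * m / x 1 < 1) :
    Rcurv G m x 1 3 1 3 = G * m / (x 1 ^ 2 * fS G m x) * Real.sin (x 2) := by
  simp [Rcurv, swl_eq_mul_eta, sw, eta, Fin.sum_univ_four, pd_const, pd_fS_mul_sin hr hf, mul_comm]

theorem Rcurv_θφ (hf : 2 * G * m / x 1 < 1) :
    Rcurv G m x 2 3 2 3 = -(2 * G * m / x 1) * Real.sin (x 2) := by
  have gauss : Rcurv G m x 2 3 2 3 = (fS G m x ^ 2 - 1) * Real.sin (x 2) := by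
    simp [Rcurv, swl_eq_mul_eta, sw, eta, Fin.sum_univ_four, pd_const, pd_cos_theta, sq,
      sub_mul, mul_assoc, neg_add_eq_sub]
  rw [gauss, fS_sq hf]
  ring

theorem Rcurv_self_eq_planeCurvature_of_lt (hr : x 1 ≠ 0) (hf : 2 * G * m / x 1 < 1) {a b : Fin 4}
    (hab : a < b) :
    Rcurv G m x a b a b = planeCurvature G m (x 1) a b * Evb G m x a a * Evb G m x b b := by
  have pairs : ∀ a b : Fin 4, a < b → (a = 0 ∧ b = 1) ∨ (a = 0 ∧ b = 2) ∨ (a = 0 ∧ b = 3) ∨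
      (a = 1 ∧ b = 2) ∨ (a = 1 ∧ b = 3) ∨ (a = 2 ∧ b = 3) := by decide
  have f_ne_zero := (fS_pos hf).ne'
  obtain ⟨rfl, rfl⟩ | ⟨rfl, rfl⟩ | ⟨rfl, rfl⟩ | ⟨rfl, rfl⟩ | ⟨rfl, rfl⟩ | ⟨rfl, rfl⟩ :=
    pairs a b hab <;>
  simp only [Rcurv_tr hr, Rcurv_tθ, Rcurv_tφ, Rcurv_rθ hr hf, Rcurv_rφ hr hf, Rcurv_θφ hf,
    planeCurvature, Evb, Matrix.cons_val] <;>
  field_simp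

theorem Rcurv_self_eq_planeCurvature (hr : x 1 ≠ 0) (hf : 2 * G * m / x 1 < 1) {a b : Fin 4}
    (hab : a ≠ b) :
    Rcurv G m x a b a b = planeCurvature G m (x 1) a b * Evb G m x a a * Evb G m x b b := by
  obtain hlt | hgt := hab.lt_or_gt
  · exact Rcurv_self_eq_planeCurvature_of_lt hr hf hlt
  · rw [Rcurv_antisymm_frame, Rcurv_antisymm_coord, neg_neg,
      Rcurv_self_eq_planeCurvature_of_lt hr hf hgt, planeCurvature_comm]
    ring

end Exterior

theorem schwarzschild_lagrangian_vanishes_general (G m : ℝ) (x : Fin 4 → ℝ) (hr : x 1 ≠ 0)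
    (hf : 2 * G * m / x 1 < 1) :
    ∑ τ : Perm (Fin 4), ((Perm.sign τ : ℤ) : ℝ) *
      ∑ a : Fin 4, ∑ b : Fin 4, ∑ c : Fin 4, ∑ d : Fin 4,
        eps a b c d * Rcurv G m x a b (τ 0) (τ 1) *
          Evb G m x c (τ 2) * Evb G m x d (τ 3) = 0 := by
  have term_eq (τ : Perm (Fin 4)) :
      (Rcurv G m x (τ 0) (τ 1) (τ 0) (τ 1) - Rcurv G m x (τ 1) (τ 0) (τ 0) (τ 1)) *
          Evb G m x (τ 2) (τ 2) * Evb G m x (τ 3) (τ 3) =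
        2 * (∏ a, Evb G m x a a) * planeCurvature G m (x 1) (τ 0) (τ 1) := by
    have distinct : τ 0 ≠ τ 1 := τ.injective.ne (by decide)
    rw [Rcurv_antisymm_frame G m x (τ 1), Rcurv_self_eq_planeCurvature hr hf distinct,
      ← Equiv.prod_comp τ, Fin.prod_univ_four]
    ring
  simp only [sign_mul_sum_eps_mul_diagonal (fun a b ↦ Rcurv G m x a b _ _) (Evb G m x)
    (Evb_of_ne G m x), term_eq]
  rw [← mul_sum, sum_perm_planeCurvature, mul_zero]

/-- for the Schwarzschild data, the Einstein--Hilbert Lagrangian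
four-form (1/4) Σ ε_{abcd} R^{ab} ∧ e^c ∧ e^d vanishes identically on U. -/
theorem schwarzschild_lagrangian_vanishes (G m : ℝ) (hG : 0 < G) (hm : 0 ≤ m)
    (x : Fin 4 → ℝ) (hx : x ∈ Uchart G m) :
    ∑ τ : Equiv.Perm (Fin 4), ((Equiv.Perm.sign τ : ℤ) : ℝ) *
      ∑ a : Fin 4, ∑ b : Fin 4, ∑ c : Fin 4, ∑ d : Fin 4,
        eps a b c d * Rcurv G m x a b (τ 0) (τ 1) *
          Evb G m x c (τ 2) * Evb G m x d (τ 3) = 0 := by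
  obtain ⟨horizon_lt, r_pos, -, -⟩ := hx
  exact schwarzschild_lagrangian_vanishes_general G m x r_pos.ne' ((div_lt_one r_pos).2 horizon_lt)
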